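/- Every PGA-program can be rewritten into a first canonical form using only the axioms PGA1–PGA4: for every PGA-program X there is a PGA-program X' such that X = X' is derivable from PGA1 ((X;Y);Z = X;(Y;Z)), PGA2 ((X^n)^ω = X^ω for n ≥ 1), PGA3 (X^ω;Y = X^ω) and PGA4 ((X;Y)^ω = X;(Y;X)^ω), and X' is either repetition-free or of the form Y;Z^ω with Y and Z repetition-free. -/

import Mathlib

/-- Primitive instructions over a set `A` of basic instructions:
basic instructions `a`, positive tests `+a`, negative tests `-a`,
jump instructions `#k` and the termination instruction `!`. -/
inductive PrimInstr (A : Type) : Type where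
  | basic (a : A)
  | pos (a : A)
  | neg (a : A)
  | jump (k : Nat)
  | halt
deriving DecidableEq

/-- PGA-programs over `A`: primitive instructions, concatenation `X;Y`
and repetition `X^ω`. -/
inductive PGA (A : Type) : Type where
  | prim (u : PrimInstr A)
  | seq (X Y : PGA A)
  | rep (X : PGA A)
deriving DecidableEq

/-- `X.pow n` is the power `X^n` for `n ≥ 1`: `X^1 = X` and `X^(n+1) = X ; X^n`.
(The value at `0` is irrelevant and set to `X`; all statements only use `n ≥ 1`.) -/
def PGA.pow {A : Type} (X : PGA A) : Nat → PGA A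
  | 0 => X
  | 1 => X
  | n+2 => X.seq (X.pow (n+1))

/-- Equational-logic derivability from the axioms PGA1-PGA4 of program algebra. -/
inductive DerivPGA {A : Type} : PGA A → PGA A → Prop
  | refl (X : PGA A) : DerivPGA X X
  | symm {X Y : PGA A} : DerivPGA X Y → DerivPGA Y X
  | trans {X Y Z : PGA A} : DerivPGA X Y → DerivPGA Y Z → DerivPGA X Z
  | seq_congr {X X' Y Y' : PGA A} : DerivPGA X X' → DerivPGA Y Y' → DerivPGA (X.seq Y) (X'.seq Y')
  | rep_congr {X Y : PGA A} : DerivPGA X Y → DerivPGA X.rep Y.rep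
  | pga1 (X Y Z : PGA A) : DerivPGA ((X.seq Y).seq Z) (X.seq (Y.seq Z))
  | pga2 (X : PGA A) (n : ℕ) (hn : 1 ≤ n) : DerivPGA ((X.pow n).rep) X.rep
  | pga3 (X Y : PGA A) : DerivPGA (X.rep.seq Y) X.rep
  | pga4 (X Y : PGA A) : DerivPGA ((X.seq Y).rep) (X.seq ((Y.seq X).rep))

/-- A PGA-program is repetition-free if it contains no repetition operator. -/
def RepFree {A : Type} : PGA A → Prop
  | .prim _ => True
  | .seq X Y => RepFree X ∧ RepFree Y
  | .rep _ => False

/-!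
PGA2 and PGA4 give the unfolding `X^ω = X;X^ω`, since `X^ω = (X;X)^ω = X;(X;X)^ω`. With PGA3 it
yields `(Z^ω)^ω = Z^ω;(Z^ω)^ω = Z^ω`. Thus `Y;Z^ω` absorbs whatever is appended to it, by PGA3, and
is fixed by repetition: `(Y;Z^ω)^ω = Y;(Z^ω;Y)^ω = Y;(Z^ω)^ω = Y;Z^ω`. Hence first canonical forms
are closed, up to derivable equality, under concatenation and repetition.
-/

namespace DerivPGA

variable {A : Type}

instance : Trans (DerivPGA (A := A)) DerivPGA DerivPGA := ⟨trans⟩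

theorem rep_unfold (X : PGA A) : DerivPGA X.rep (X.seq X.rep) :=
  have rep_seq_self : DerivPGA (X.seq X).rep X.rep := pga2 X 2 one_le_two
  calc
    DerivPGA X.rep (X.seq X).rep := rep_seq_self.symm
    DerivPGA _ (X.seq (X.seq X).rep) := pga4 X X
    DerivPGA _ (X.seq X.rep) := seq_congr (refl X) rep_seq_self

theorem rep_rep (X : PGA A) : DerivPGA X.rep.rep X.rep :=
  (rep_unfold X.rep).trans (pga3 X X.rep.rep)

theorem seq_rep_seq (X Y Z : PGA A) : DerivPGA ((X.seq Y.rep).seq Z) (X.seq Y.rep) :=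
  (pga1 X Y.rep Z).trans (seq_congr (refl X) (pga3 Y Z))

theorem rep_seq_rep (X Y : PGA A) : DerivPGA (X.seq Y.rep).rep (X.seq Y.rep) :=
  calc
    DerivPGA (X.seq Y.rep).rep (X.seq (Y.rep.seq X).rep) := pga4 X Y.rep
    DerivPGA _ (X.seq Y.rep.rep) := seq_congr (refl X) (rep_congr (pga3 Y X))
    DerivPGA _ (X.seq Y.rep) := seq_congr (refl X) (rep_rep Y)

end DerivPGA

namespace PGA

variable {A : Type} {X Y : PGA A}

/-- First canonical forms: repetition-free programs, and programs `Y;Z^ω` with `Y` and `Z`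
repetition-free. The shape is syntactic, so `Z^ω` alone does not qualify. -/
def IsFirstCanonicalForm (X : PGA A) : Prop :=
  RepFree X ∨ ∃ Y Z : PGA A, X = Y.seq Z.rep ∧ RepFree Y ∧ RepFree Z

/-- `X` is derivably equal to some first canonical form; the property established by induction
on programs. -/
def HasFirstCanonicalForm (X : PGA A) : Prop :=
  ∃ X' : PGA A, DerivPGA X X' ∧ X'.IsFirstCanonicalForm

theorem IsFirstCanonicalForm.hasFirstCanonicalForm (hX : X.IsFirstCanonicalForm) :
    X.HasFirstCanonicalForm :=
  ⟨X, .refl X, hX⟩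

theorem HasFirstCanonicalForm.of_deriv (hXY : DerivPGA X Y) (hY : Y.HasFirstCanonicalForm) :
    X.HasFirstCanonicalForm :=
  let ⟨Y', hYY', hY'⟩ := hY
  ⟨Y', hXY.trans hYY', hY'⟩

theorem IsFirstCanonicalForm.seq (hX : X.IsFirstCanonicalForm) (hY : Y.IsFirstCanonicalForm) :
    (X.seq Y).HasFirstCanonicalForm := by
  rcases hX with hX | ⟨U, V, rfl, hU, hV⟩
  · rcases hY with hY | ⟨U, V, rfl, hU, hV⟩
    · exact hasFirstCanonicalForm (.inl ⟨hX, hY⟩)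
    · exact ⟨(X.seq U).seq V.rep, (DerivPGA.pga1 X U V.rep).symm, .inr ⟨_, _, rfl, ⟨hX, hU⟩, hV⟩⟩
  · exact ⟨U.seq V.rep, .seq_rep_seq U V Y, .inr ⟨U, V, rfl, hU, hV⟩⟩

theorem IsFirstCanonicalForm.rep (hX : X.IsFirstCanonicalForm) : X.rep.HasFirstCanonicalForm := by
  rcases hX with hX | ⟨U, V, rfl, hU, hV⟩
  · exact ⟨X.seq X.rep, .rep_unfold X, .inr ⟨X, X, rfl, hX, hX⟩⟩
  · exact ⟨U.seq V.rep, .rep_seq_rep U V, .inr ⟨U, V, rfl, hU, hV⟩⟩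

theorem HasFirstCanonicalForm.seq (hX : X.HasFirstCanonicalForm) (hY : Y.HasFirstCanonicalForm) :
    (X.seq Y).HasFirstCanonicalForm :=
  let ⟨_, hXX', hX'⟩ := hX
  let ⟨_, hYY', hY'⟩ := hY
  of_deriv (.seq_congr hXX' hYY') (hX'.seq hY')

theorem HasFirstCanonicalForm.rep (hX : X.HasFirstCanonicalForm) : X.rep.HasFirstCanonicalForm :=
  let ⟨_, hXX', hX'⟩ := hX
  of_deriv (.rep_congr hXX') hX'.rep

end PGA

/-- Every PGA-program can be rewritten, using only PGA1-PGA4, into a first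
canonical form: one that is repetition-free, or of the form `Y ; Z^ω` with
`Y` and `Z` repetition-free. -/
theorem exists_first_canonical_form (A : Type) (X : PGA A) :
    ∃ X' : PGA A, DerivPGA X X' ∧
      (RepFree X' ∨ ∃ Y Z : PGA A, X' = Y.seq Z.rep ∧ RepFree Y ∧ RepFree Z) := by
  change X.HasFirstCanonicalForm
  induction X with
  | prim u => exact PGA.IsFirstCanonicalForm.hasFirstCanonicalForm (.inl trivial)
  | seq X Y hX hY => exact hX.seq hY
  | rep X hX => exact hX.rep
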